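/- arXiv:1712.05731 — 2 statements merged into one kernel-verified Lean document; each statement's English description precedes it below -/
import Mathlib

section
/- Fix η > 0, m ∈ ℕ₊ and δ > 0. Let f_0, f_1, f : [0,1]^p → ℝ be bounded measurable functions satisfying ‖f − f_0‖_∞² ≤ η(m‖f − f_0‖₂² + δ²), ‖f_1 − f_0‖_∞² ≤ η(m‖f_1 − f_0‖₂² + δ²), and ‖f − f_1‖₂ ≤ ‖f_0 − f_1‖₂. Define g = (f − f_1)² − (1/16)(f_1 − f_0)². Then there is a constant C > 0, depending only on η, such that ‖g‖₂² ≤ C (m‖f_1 − f_0‖₂² + δ²) ‖f_0 − f_1‖₂² and ‖g‖_∞ ≤ C (m‖f_0 − f_1‖₂² + δ²). -/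
open MeasureTheory ProbabilityTheory Real Filter
open scoped ENNReal NNReal

noncomputable section

/-- The unit cube `[0,1]^p`. -/
def cube (p : ℕ) : Set (Fin p → ℝ) := Set.Icc 0 1

/-- Uniform distribution on `[0,1]^p`. -/
def designMeasure (p : ℕ) : Measure (Fin p → ℝ) := volume.restrict (cube p)

/-- Integrated `L²`-distance on `[0,1]^p`. -/
def l2dist (p : ℕ) (f g : (Fin p → ℝ) → ℝ) : ℝ :=
  Real.sqrt (∫ x in cube p, (f x - g x) ^ 2)

/-- Sup-norm distance on `[0,1]^p`. -/
def supdist (p : ℕ) (f g : (Fin p → ℝ) → ℝ) : ℝ :=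
  ⨆ x : cube p, |f x.1 - g x.1|

/-- `N(0,σ²)` density evaluated at `y - μ`. -/
def gpdf (σ μ y : ℝ) : ℝ := gaussianPDFReal μ (Real.toNNReal (σ ^ 2)) y

/-- Law of one observation `(x, y)`, `x ~ Unif([0,1]^p)`, `y | x ~ N(f(x), σ²)`. -/
def Pobs (p : ℕ) (σ : ℝ) (f : (Fin p → ℝ) → ℝ) : Measure ((Fin p → ℝ) × ℝ) :=
  ((designMeasure p).prod volume).withDensity fun z => ENNReal.ofReal (gpdf σ (f z.1) z.2)

/-- Law of `n` i.i.d. observations. -/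
def PobsN (p : ℕ) (σ : ℝ) (f : (Fin p → ℝ) → ℝ) (n : ℕ) :
    Measure (Fin n → (Fin p → ℝ) × ℝ) :=
  Measure.pi fun _ => Pobs p σ f

/-- Likelihood ratio `∏ᵢ p_f(xᵢ,yᵢ)/p_{f₀}(xᵢ,yᵢ)`. -/
def LR (σ : ℝ) {p n : ℕ} (f₀ f : (Fin p → ℝ) → ℝ) (D : Fin n → (Fin p → ℝ) × ℝ) : ℝ :=
  ∏ i, gpdf σ (f (D i).1) (D i).2 / gpdf σ (f₀ (D i).1) (D i).2

/-- Posterior mass of `A` given data `D`. -/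
def post (σ : ℝ) {p n : ℕ} (f₀ : (Fin p → ℝ) → ℝ) (Pi : Measure ((Fin p → ℝ) → ℝ))
    (D : Fin n → (Fin p → ℝ) × ℝ) (A : Set ((Fin p → ℝ) → ℝ)) : ℝ :=
  (∫ f in A, LR σ f₀ f D ∂Pi) / (∫ f, LR σ f₀ f D ∂Pi)

/-- Covering number of `S` by `d`-balls of radius `ε`. -/
def covN {α : Type*} (ε : ℝ) (S : Set α) (d : α → α → ℝ) : ℝ≥0∞ :=
  ⨅ (T : Finset α) (_ : ∀ f ∈ S, ∃ g ∈ T, d f g < ε), (T.card : ℝ≥0∞)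

/-- The sieve property `‖f-f₀‖∞² ≤ η (m ‖f-f₀‖₂² + δ²)`. -/
def SieveProp (p : ℕ) (f₀ : (Fin p → ℝ) → ℝ) (η : ℝ) (m : ℕ) (δ : ℝ)
    (F : Set ((Fin p → ℝ) → ℝ)) : Prop :=
  ∀ f ∈ F, supdist p f f₀ ^ 2 ≤ η * (m * l2dist p f f₀ ^ 2 + δ ^ 2)

/-- The neighborhood `B(m, ε, ω)`. -/
def klBall (p : ℕ) (f₀ : (Fin p → ℝ) → ℝ) (η' : ℝ) (m : ℕ) (ε ω : ℝ) :
    Set ((Fin p → ℝ) → ℝ) :=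
  {f | l2dist p f f₀ < ε ∧ supdist p f f₀ ^ 2 ≤ η' * (m * l2dist p f f₀ ^ 2 + ω ^ 2)}

/-!
Write `u = f - f₁`, `v = f₁ - f₀`, so that `g = u² - v² / 16`, and `k² = η (m ‖v‖₂² + δ²)`. Since
`‖u‖₂ ≤ ‖v‖₂`, the triangle inequality gives `‖u + v‖₂ ≤ 2 ‖v‖₂`, and the two sup-norm hypotheses
yield `|u + v| ≤ 2 k` and `|v| ≤ k`, hence `|u| ≤ 3 k`. Thus `|g| ≤ 9 k²` pointwise, while bounding
one factor of each square by its supremum gives `‖g‖₂ ≤ 3 k ‖u‖₂ + (k / 16) ‖v‖₂ ≤ 4 k ‖v‖₂`.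
-/

section LpNorm

variable {α : Type*} [MeasurableSpace α] {μ : Measure α} {q : ℝ≥0∞} {a b c : ℝ} {h u v : α → ℝ}

lemma lpNorm_le_mul_lpNorm_of_ae_le_mul {E F : Type*} [NormedAddCommGroup E]
    [NormedAddCommGroup F] {φ : α → E} {ψ : α → F} (hc : 0 ≤ c) (hψ : MemLp ψ q μ)
    (hle : ∀ᵐ x ∂μ, ‖φ x‖ ≤ c * ‖ψ x‖) : lpNorm φ q μ ≤ c * lpNorm ψ q μ := by
  by_cases hφ : AEStronglyMeasurable φ μ
  · rw [← toReal_eLpNorm hφ, ← toReal_eLpNorm hψ.aestronglyMeasurable, ← ENNReal.toReal_ofReal hc,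
      ← ENNReal.toReal_mul]
    exact ENNReal.toReal_mono (ENNReal.mul_ne_top ENNReal.ofReal_ne_top hψ.eLpNorm_ne_top)
      (eLpNorm_le_mul_eLpNorm_of_ae_le_mul hle q)
  · rw [lpNorm_of_not_aestronglyMeasurable hφ]
    exact mul_nonneg hc lpNorm_nonneg

lemma ae_norm_sq_le_mul_norm_of_ae_abs_le (huc : ∀ᵐ x ∂μ, |u x| ≤ c) :
    ∀ᵐ x ∂μ, ‖(u ^ 2) x‖ ≤ c * ‖u x‖ := by
  filter_upwards [huc] with x hx
  rw [Pi.pow_apply, sq, norm_mul]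
  exact mul_le_mul_of_nonneg_right hx (norm_nonneg _)

lemma lpNorm_sq_sub_smul_sq_le (hq : 1 ≤ q) (ha : 0 ≤ a) (hb : 0 ≤ b) (hu : MemLp u q μ)
    (hv : MemLp v q μ) (hua : ∀ᵐ x ∂μ, |u x| ≤ a) (hvb : ∀ᵐ x ∂μ, |v x| ≤ b) (r : ℝ) :
    lpNorm (u ^ 2 - r • v ^ 2) q μ ≤ a * lpNorm u q μ + |r| * (b * lpNorm v q μ) := by
  have hua_sq := ae_norm_sq_le_mul_norm_of_ae_abs_le hua
  have hvb_sq := ae_norm_sq_le_mul_norm_of_ae_abs_le hvb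
  have hu_sq : MemLp (u ^ 2) q μ := hu.of_le_mul (hu.aestronglyMeasurable.pow 2) hua_sq
  calc lpNorm (u ^ 2 - r • v ^ 2) q μ
      ≤ lpNorm (u ^ 2) q μ + lpNorm (r • v ^ 2) q μ := lpNorm_sub_le hu_sq hq
    _ = lpNorm (u ^ 2) q μ + |r| * lpNorm (v ^ 2) q μ := by
      rw [lpNorm_const_smul, coe_nnnorm, Real.norm_eq_abs]
    _ ≤ a * lpNorm u q μ + |r| * (b * lpNorm v q μ) := by
      gcongr
      · exact lpNorm_le_mul_lpNorm_of_ae_le_mul ha hu hua_sq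
      · exact lpNorm_le_mul_lpNorm_of_ae_le_mul hb hv hvb_sq

lemma sqrt_integral_sq_eq_lpNorm (hh : AEStronglyMeasurable h μ) :
    √(∫ x, h x ^ 2 ∂μ) = lpNorm h 2 μ := by
  simp [lpNorm_eq_integral_norm_rpow_toReal two_ne_zero ENNReal.ofNat_ne_top hh,
    Real.sqrt_eq_rpow]

lemma memLp_of_exists_abs_le [IsFiniteMeasure μ] (hh : AEStronglyMeasurable h μ)
    (hbdd : ∃ B, ∀ x, |h x| ≤ B) : MemLp h q μ :=
  hbdd.elim fun B hB ↦ .of_bound hh B (.of_forall hB)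

end LpNorm

lemma bddAbove_range_abs_sub {α : Type*} {g h : α → ℝ} (hg : ∃ B, ∀ x, |g x| ≤ B)
    (hh : ∃ B, ∀ x, |h x| ≤ B) (s : Set α) :
    BddAbove (Set.range fun x : s ↦ |g x - h x|) := by
  obtain ⟨B, hB⟩ := hg
  obtain ⟨B', hB'⟩ := hh
  exact ⟨B + B', Set.forall_mem_range.2 fun x ↦ (abs_sub _ _).trans (add_le_add (hB x) (hB' x))⟩

lemma abs_le_of_iSup_abs_sq_le {ι : Type*} {h : ι → ℝ} {c : ℝ} (hc : 0 ≤ c)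
    (hbdd : BddAbove (Set.range fun i ↦ |h i|)) (hsup : (⨆ i, |h i|) ^ 2 ≤ c ^ 2) (i : ι) :
    |h i| ≤ c :=
  (le_ciSup hbdd i).trans (le_of_sq_le_sq hsup hc)

lemma abs_sq_sub_mul_sq_le {u v r c : ℝ} (hr₀ : 0 ≤ r) (hr₁ : r ≤ 1) (hu : |u| ≤ c)
    (hv : |v| ≤ c) : |u ^ 2 - r * v ^ 2| ≤ c ^ 2 :=
  abs_sub_le_of_nonneg_of_le (sq_nonneg u) (sq_le_sq.2 (hu.trans (le_abs_self c)))
    (by positivity) ((mul_le_of_le_one_left (sq_nonneg v) hr₁).trans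
      (sq_le_sq.2 (hv.trans (le_abs_self c))))

lemma mul_sq_add_sq_le_of_le_mul {η m A W c δ : ℝ} (hη : 0 ≤ η) (hm : 0 ≤ m) (hc : 1 ≤ c)
    (hW : 0 ≤ W) (hWA : W ≤ c * A) :
    η * (m * W ^ 2 + δ ^ 2) ≤ c ^ 2 * (η * (m * A ^ 2 + δ ^ 2)) := calc
  η * (m * W ^ 2 + δ ^ 2) ≤ η * (m * (c * A) ^ 2 + c ^ 2 * δ ^ 2) := by
    gcongr
    exact le_mul_of_one_le_left (sq_nonneg δ) (one_le_pow₀ hc)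
  _ = c ^ 2 * (η * (m * A ^ 2 + δ ^ 2)) := by ring

theorem statement16_general {α : Type*} [MeasurableSpace α] {μ : Measure α} {s : Set α}
    (hs : ∀ᵐ x ∂μ, x ∈ s) {q : ℝ≥0∞} (hq : 1 ≤ q) {η m δ : ℝ} (hη : 0 ≤ η) (hm : 0 ≤ m)
    {f₀ f₁ f : α → ℝ} (hf : MemLp (f - f₁) q μ) (hf₁ : MemLp (f₁ - f₀) q μ)
    (hbdd : BddAbove (Set.range fun x : s ↦ |f x - f₀ x|))
    (hbdd₁ : BddAbove (Set.range fun x : s ↦ |f₁ x - f₀ x|))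
    (hsup : (⨆ x : s, |f x - f₀ x|) ^ 2 ≤ η * (m * lpNorm (f - f₀) q μ ^ 2 + δ ^ 2))
    (hsup₁ : (⨆ x : s, |f₁ x - f₀ x|) ^ 2 ≤ η * (m * lpNorm (f₁ - f₀) q μ ^ 2 + δ ^ 2))
    (hle : lpNorm (f - f₁) q μ ≤ lpNorm (f₀ - f₁) q μ) :
    lpNorm ((f - f₁) ^ 2 - (1 / 16 : ℝ) • (f₁ - f₀) ^ 2) q μ ^ 2 ≤
        16 * η * (m * lpNorm (f₁ - f₀) q μ ^ 2 + δ ^ 2) * lpNorm (f₀ - f₁) q μ ^ 2 ∧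
      (⨆ x : s, |(f x - f₁ x) ^ 2 - (1 / 16) * (f₁ x - f₀ x) ^ 2|) ≤
        16 * η * (m * lpNorm (f₀ - f₁) q μ ^ 2 + δ ^ 2) := by
  rw [lpNorm_sub_comm f₀ f₁] at hle ⊢
  set A := lpNorm (f₁ - f₀) q μ
  have hA : 0 ≤ A := lpNorm_nonneg
  obtain ⟨k, hk, hk_sq⟩ : ∃ k, 0 ≤ k ∧ k ^ 2 = η * (m * A ^ 2 + δ ^ 2) :=
    ⟨√_, Real.sqrt_nonneg _, Real.sq_sqrt (by positivity)⟩
  have htri : lpNorm (f - f₀) q μ ≤ 2 * A := by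
    rw [← sub_add_sub_cancel f f₁ f₀]
    linarith [lpNorm_add_le hf hq (g := f₁ - f₀)]
  have hw : ∀ x : s, |f x - f₀ x| ≤ 2 * k := by
    refine abs_le_of_iSup_abs_sq_le (by positivity) hbdd (hsup.trans ?_)
    rw [mul_pow, hk_sq]
    exact mul_sq_add_sq_le_of_le_mul hη hm one_le_two lpNorm_nonneg htri
  have hv : ∀ x : s, |f₁ x - f₀ x| ≤ k :=
    abs_le_of_iSup_abs_sq_le hk hbdd₁ (hsup₁.trans_eq hk_sq.symm)
  have hu : ∀ x : s, |f x - f₁ x| ≤ 3 * k := fun x ↦ by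
    linarith [abs_sub_le (f x) (f₀ x) (f₁ x), abs_sub_comm (f₀ x) (f₁ x), hw x, hv x]
  constructor
  · have hL : lpNorm ((f - f₁) ^ 2 - (1 / 16 : ℝ) • (f₁ - f₀) ^ 2) q μ ≤ 4 * k * A := calc
      _ ≤ 3 * k * lpNorm (f - f₁) q μ + |1 / 16| * (k * A) :=
        lpNorm_sq_sub_smul_sq_le hq (by positivity) hk hf hf₁
          (hs.mono fun x hx ↦ hu ⟨x, hx⟩) (hs.mono fun x hx ↦ hv ⟨x, hx⟩) _
      _ ≤ 3 * k * A + 1 * (k * A) := by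
        gcongr
        norm_num
      _ = 4 * k * A := by ring
    calc _ ≤ (4 * k * A) ^ 2 := pow_le_pow_left₀ lpNorm_nonneg hL 2
      _ = _ := by linear_combination 16 * A ^ 2 * hk_sq
  · refine Real.iSup_le (fun x ↦ ?_) (by positivity)
    calc _ ≤ (3 * k) ^ 2 :=
          abs_sq_sub_mul_sq_le (by norm_num) (by norm_num) (hu x) ((hv x).trans (by linarith))
      _ ≤ 16 * η * (m * A ^ 2 + δ ^ 2) := by linarith [mul_pow 3 k 2, sq_nonneg k]

instance isFiniteMeasure_designMeasure (p : ℕ) : IsFiniteMeasure (designMeasure p) :=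
  isFiniteMeasure_restrict.2 isCompact_Icc.measure_lt_top.ne

lemma ae_mem_cube (p : ℕ) : ∀ᵐ x ∂designMeasure p, x ∈ cube p :=
  ae_restrict_mem measurableSet_Icc

lemma l2dist_eq_lpNorm_sub {p : ℕ} {g h : (Fin p → ℝ) → ℝ} (hg : Measurable g)
    (hh : Measurable h) : l2dist p g h = lpNorm (g - h) 2 (designMeasure p) :=
  sqrt_integral_sq_eq_lpNorm (hg.sub hh).aestronglyMeasurable

/-- norm bounds for the auxiliary function
`g = (f - f₁)² - (1/16)(f₁ - f₀)²` in the type-II error analysis. -/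
theorem statement16 (η : ℝ) (hη : 0 < η) :
    ∃ C : ℝ, 0 < C ∧
      ∀ (p m : ℕ) (δ : ℝ), 0 < m → 0 < δ →
        ∀ f₀ f₁ f : (Fin p → ℝ) → ℝ,
          Measurable f₀ → Measurable f₁ → Measurable f →
          (∃ B : ℝ, ∀ x, |f₀ x| ≤ B) → (∃ B : ℝ, ∀ x, |f₁ x| ≤ B) →
          (∃ B : ℝ, ∀ x, |f x| ≤ B) →
          supdist p f f₀ ^ 2 ≤ η * ((m : ℝ) * l2dist p f f₀ ^ 2 + δ ^ 2) →
          supdist p f₁ f₀ ^ 2 ≤ η * ((m : ℝ) * l2dist p f₁ f₀ ^ 2 + δ ^ 2) →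
          l2dist p f f₁ ≤ l2dist p f₀ f₁ →
          (Real.sqrt (∫ x in cube p,
              ((f x - f₁ x) ^ 2 - (1 / 16) * (f₁ x - f₀ x) ^ 2) ^ 2) ^ 2 ≤
            C * ((m : ℝ) * l2dist p f₁ f₀ ^ 2 + δ ^ 2) * l2dist p f₀ f₁ ^ 2) ∧
          (⨆ x : cube p, |(f x.1 - f₁ x.1) ^ 2 - (1 / 16) * (f₁ x.1 - f₀ x.1) ^ 2|) ≤
            C * ((m : ℝ) * l2dist p f₀ f₁ ^ 2 + δ ^ 2) := by
  refine ⟨16 * η, by positivity, fun p m δ _ _ f₀ f₁ f hf₀ hf₁ hf hb₀ hb₁ hb hsup hsup₁ hle ↦ ?_⟩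
  have memLp_two {h : (Fin p → ℝ) → ℝ} (hh : Measurable h) (hbh : ∃ B, ∀ x, |h x| ≤ B) :
      MemLp h 2 (designMeasure p) := memLp_of_exists_abs_le hh.aestronglyMeasurable hbh
  simp only [l2dist_eq_lpNorm_sub, hf₀, hf₁, hf] at hsup hsup₁ hle ⊢
  rw [sqrt_integral_sq_eq_lpNorm (Measurable.aestronglyMeasurable (by fun_prop))]
  exact statement16_general (ae_mem_cube p) one_le_two hη.le m.cast_nonneg
    ((memLp_two hf hb).sub (memLp_two hf₁ hb₁)) ((memLp_two hf₁ hb₁).sub (memLp_two hf₀ hb₀))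
    (bddAbove_range_abs_sub hb hb₀ _) (bddAbove_range_abs_sub hb₁ hb₀ _) hsup hsup₁ hle
end
end

section
/- Fix η > 0, m ∈ ℕ₊ and δ > 0. Let f_0, f_1, f : [0,1]^p → ℝ be bounded measurable functions satisfying ‖f − f_0‖_∞² ≤ η(m‖f − f_0‖₂² + δ²), ‖f_1 − f_0‖_∞² ≤ η(m‖f_1 − f_0‖₂² + δ²), ‖f − f_1‖₂² ≤ ‖f_1 − f_0‖₂²/32, and ‖f_1 − f_0‖₂ > 0. Let x_1,…,x_n be i.i.d. uniform on [0,1]^p. Then there exists a constant C̃ > 0, depending only on η, such that P( P_n(f − f_1)² > (1/16) P_n(f_1 − f_0)² ) ≤ exp( −C̃ n ‖f_1 − f_0‖₂² / (m‖f_1 − f_0‖₂² + δ²) ), where P_n h = n^{−1} Σ_{i=1}^n h(x_i). -/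
open MeasureTheory ProbabilityTheory Real Filter
open scoped ENNReal NNReal

noncomputable section

/-!
This is Bernstein's inequality in its mgf form: if `|g| ≤ M` and `0 ≤ t ≤ 1 / M`, then
`exp (t g) ≤ 1 + t g + (t g)²`, so that `E exp (t g) ≤ exp (t E g + t² E g²)`, and Markov's
inequality bounds `P (0 ≤ ∑ g (xᵢ))` by the `n`-th power of the right-hand side.

Take `g = U - c V` with `U = (f - f₁)²`, `V = (f₁ - f₀)²`, `c = 1/16`, where `E U ≤ c E V / 2`. Then
`E g ≤ -c E V / 2`, while `0 ≤ U, V ≤ M` gives `E g² ≤ 3/2 c M E V`. So `E g²` is at most of order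
`M |E g|`, and `t = 1 / (6 M)` leaves the exponent `-n c E V / (24 M)`. Finally,
`‖f - f₀‖₂² ≤ 33/16 ‖f₁ - f₀‖₂²`, so the two sup-norm conditions allow
`M = 49/8 η (m ‖f₁ - f₀‖₂² + δ²)`, whence the constant `1 / (24 · 16 · 49/8 · η) = 1 / (2352 η)`.
-/

section Bernstein

variable {E : Type*} {mE : MeasurableSpace E} {μ : Measure E} {g : E → ℝ} {t M : ℝ}

lemma exp_le_one_add_self_add_sq {y : ℝ} (hy : |y| ≤ 1) : exp y ≤ 1 + y + y ^ 2 := by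
  linarith [(abs_le.1 (abs_exp_sub_one_sub_id_le hy)).2]

lemma mgf_le_exp_of_ae_abs_le [IsProbabilityMeasure μ] (hg : AEMeasurable g μ)
    (hgM : ∀ᵐ x ∂μ, |g x| ≤ M) (htM : |t| * M ≤ 1) :
    mgf g μ t ≤ exp (t * ∫ x, g x ∂μ + t ^ 2 * ∫ x, g x ^ 2 ∂μ) := by
  have g_int : Integrable g μ := .of_bound hg.aestronglyMeasurable M hgM
  have g_sq_int : Integrable (fun x => g x ^ 2) μ := by
    refine .of_bound (hg.pow_const 2).aestronglyMeasurable (M ^ 2) ?_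
    filter_upwards [hgM] with x hx
    rw [norm_eq_abs, abs_pow]
    gcongr
  have exp_int : Integrable (fun x => exp (t * g x)) μ :=
    integrable_exp_mul_of_mem_Icc hg (hgM.mono fun x hx => abs_le.1 hx)
  have pointwise : ∀ᵐ x ∂μ, exp (t * g x) ≤ 1 + (t * g x + t ^ 2 * g x ^ 2) := by
    filter_upwards [hgM] with x hx
    have htg : |t * g x| ≤ 1 := by
      rw [abs_mul]
      exact (mul_le_mul_of_nonneg_left hx (abs_nonneg t)).trans htM
    linarith [exp_le_one_add_self_add_sq htg, mul_pow t (g x) 2]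
  have lin_int : Integrable (fun x => t * g x + t ^ 2 * g x ^ 2) μ :=
    (g_int.const_mul t).add (g_sq_int.const_mul (t ^ 2))
  calc mgf g μ t
      ≤ ∫ x, (1 + (t * g x + t ^ 2 * g x ^ 2)) ∂μ :=
        integral_mono_ae exp_int ((integrable_const 1).add lin_int) pointwise
    _ = (t * ∫ x, g x ∂μ + t ^ 2 * ∫ x, g x ^ 2 ∂μ) + 1 := by
        rw [integral_add (integrable_const 1) lin_int,
          integral_add (g_int.const_mul t) (g_sq_int.const_mul (t ^ 2)),
          integral_const_mul, integral_const_mul, integral_const, probReal_univ, one_smul, add_comm]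
    _ ≤ exp (t * ∫ x, g x ∂μ + t ^ 2 * ∫ x, g x ^ 2 ∂μ) := add_one_le_exp _

lemma mgf_pi_sum (ι : Type*) [Fintype ι] [SigmaFinite μ] :
    mgf (fun X : ι → E => ∑ i, g (X i)) (Measure.pi fun _ => μ) t =
      mgf g μ t ^ Fintype.card ι := by
  simp only [mgf, Finset.mul_sum, exp_sum]
  exact integral_fintype_prod_eq_pow fun x => exp (t * g x)

lemma measureReal_pi_sum_nonneg_le_exp (ι : Type*) [Fintype ι] [IsProbabilityMeasure μ]
    (hg : AEMeasurable g μ) (hgM : ∀ᵐ x ∂μ, |g x| ≤ M) (ht : 0 ≤ t) (htM : t * M ≤ 1) :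
    (Measure.pi fun _ : ι => μ).real {X | 0 ≤ ∑ i, g (X i)} ≤
      exp (Fintype.card ι * (t * ∫ x, g x ∂μ + t ^ 2 * ∫ x, g x ^ 2 ∂μ)) := by
  have exp_sum_int : Integrable (fun X : ι → E => exp (t * ∑ i, g (X i)))
      (Measure.pi fun _ => μ) := by
    simp only [Finset.mul_sum, exp_sum]
    exact .fintype_prod (f := fun _ x => exp (t * g x)) fun _ =>
      integrable_exp_mul_of_mem_Icc hg (hgM.mono fun x hx => abs_le.1 hx)
  calc (Measure.pi fun _ : ι => μ).real {X | 0 ≤ ∑ i, g (X i)}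
      ≤ exp (-t * 0) * mgf (fun X : ι → E => ∑ i, g (X i)) (Measure.pi fun _ => μ) t :=
        measure_ge_le_exp_mul_mgf 0 ht exp_sum_int
    _ = mgf g μ t ^ Fintype.card ι := by rw [mul_zero, exp_zero, one_mul, mgf_pi_sum]
    _ ≤ exp (t * ∫ x, g x ∂μ + t ^ 2 * ∫ x, g x ^ 2 ∂μ) ^ Fintype.card ι := by
        gcongr
        · exact mgf_nonneg
        · exact mgf_le_exp_of_ae_abs_le hg hgM (by rwa [abs_of_nonneg ht])
    _ = exp (Fintype.card ι * (t * ∫ x, g x ∂μ + t ^ 2 * ∫ x, g x ^ 2 ∂μ)) :=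
        (exp_nat_mul _ _).symm

end Bernstein

section EmpiricalComparison

variable {E : Type*} {mE : MeasurableSpace E} {μ : Measure E} {U V : E → ℝ} {c M : ℝ}

lemma sub_mul_sq_le {u v : ℝ} (hc₀ : 0 ≤ c) (hc₁ : c ≤ 1) (hu : u ∈ Set.Icc 0 M)
    (hv : v ∈ Set.Icc 0 M) : (u - c * v) ^ 2 ≤ M * (u + c * v) := by
  have hcv : c * v ∈ Set.Icc 0 M :=
    ⟨mul_nonneg hc₀ hv.1, (mul_le_of_le_one_left hv.1 hc₁).trans hv.2⟩
  nlinarith [mul_nonneg hu.1 hcv.1, mul_nonneg hu.1 (sub_nonneg.2 hu.2),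
    mul_nonneg hcv.1 (sub_nonneg.2 hcv.2)]

lemma integral_sub_mul_sq_le [IsFiniteMeasure μ] (hU : AEMeasurable U μ) (hV : AEMeasurable V μ)
    (hUM : ∀ᵐ x ∂μ, U x ∈ Set.Icc 0 M) (hVM : ∀ᵐ x ∂μ, V x ∈ Set.Icc 0 M)
    (hc₀ : 0 ≤ c) (hc₁ : c ≤ 1) :
    ∫ x, (U x - c * V x) ^ 2 ∂μ ≤ M * (∫ x, U x ∂μ + c * ∫ x, V x ∂μ) := by
  have U_int : Integrable U μ := .of_mem_Icc 0 M hU hUM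
  have cV_int : Integrable (fun x => c * V x) μ := (Integrable.of_mem_Icc 0 M hV hVM).const_mul c
  calc ∫ x, (U x - c * V x) ^ 2 ∂μ
      ≤ ∫ x, M * (U x + c * V x) ∂μ := by
        refine integral_mono_of_nonneg (.of_forall fun x => sq_nonneg _)
          ((U_int.add cV_int).const_mul M) ?_
        filter_upwards [hUM, hVM] with x hu hv using sub_mul_sq_le hc₀ hc₁ hu hv
    _ = M * (∫ x, U x ∂μ + c * ∫ x, V x ∂μ) := by
        rw [integral_const_mul, integral_add U_int cV_int, integral_const_mul]

lemma measureReal_pi_mul_sum_le_sum_le_exp (ι : Type*) [Fintype ι] [IsProbabilityMeasure μ]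
    (hU : AEMeasurable U μ) (hV : AEMeasurable V μ)
    (hUM : ∀ᵐ x ∂μ, U x ∈ Set.Icc 0 M) (hVM : ∀ᵐ x ∂μ, V x ∈ Set.Icc 0 M)
    (hM : 0 < M) (hc₀ : 0 ≤ c) (hc₁ : c ≤ 1) (hUV : ∫ x, U x ∂μ ≤ c / 2 * ∫ x, V x ∂μ) :
    (Measure.pi fun _ : ι => μ).real {X | c * ∑ i, V (X i) ≤ ∑ i, U (X i)} ≤
      exp (-(Fintype.card ι * (c * ∫ x, V x ∂μ) / (24 * M))) := by
  set g : E → ℝ := fun x => U x - c * V x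
  set v := ∫ x, V x ∂μ
  have abs_g_le : ∀ᵐ x ∂μ, |g x| ≤ M := by
    filter_upwards [hUM, hVM] with x hu hv
    exact abs_sub_le_of_nonneg_of_le hu.1 hu.2 (mul_nonneg hc₀ hv.1)
      ((mul_le_of_le_one_left hv.1 hc₁).trans hv.2)
  have mean_le : ∫ x, g x ∂μ ≤ -(c * v / 2) := by
    rw [integral_sub (.of_mem_Icc 0 M hU hUM) ((Integrable.of_mem_Icc 0 M hV hVM).const_mul c),
      integral_const_mul]
    linarith
  have second_moment_le : ∫ x, g x ^ 2 ∂μ ≤ M * (3 / 2 * (c * v)) := by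
    refine (integral_sub_mul_sq_le hU hV hUM hVM hc₀ hc₁).trans ?_
    gcongr
    linarith
  have event_eq : {X : ι → E | c * ∑ i, V (X i) ≤ ∑ i, U (X i)} = {X | 0 ≤ ∑ i, g (X i)} := by
    simp only [g, Finset.sum_sub_distrib, Finset.mul_sum, sub_nonneg]
  rw [event_eq]
  calc (Measure.pi fun _ : ι => μ).real {X | 0 ≤ ∑ i, g (X i)}
      ≤ exp (Fintype.card ι *
          (1 / (6 * M) * ∫ x, g x ∂μ + (1 / (6 * M)) ^ 2 * ∫ x, g x ^ 2 ∂μ)) :=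
        measureReal_pi_sum_nonneg_le_exp ι (hU.sub (hV.const_mul c)) abs_g_le (by positivity)
          (by field_simp; norm_num)
    _ ≤ exp (Fintype.card ι *
          (1 / (6 * M) * -(c * v / 2) + (1 / (6 * M)) ^ 2 * (M * (3 / 2 * (c * v))))) := by
        gcongr
    _ = exp (-(Fintype.card ι * (c * v) / (24 * M))) := by
        congr 1
        field_simp
        ring

lemma sub_sq_le_two_mul_add (x y z : ℝ) : (x - z) ^ 2 ≤ 2 * ((x - y) ^ 2 + (y - z) ^ 2) := by
  simpa only [sub_add_sub_cancel] using add_sq_le (a := x - y) (b := y - z)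

lemma integral_sub_sq_le_two_mul_add {f g h : E → ℝ} (hfg : Integrable (fun x => (f x - g x) ^ 2) μ)
    (hgh : Integrable (fun x => (g x - h x) ^ 2) μ) :
    ∫ x, (f x - h x) ^ 2 ∂μ ≤ 2 * (∫ x, (f x - g x) ^ 2 ∂μ + ∫ x, (g x - h x) ^ 2 ∂μ) := by
  rw [← integral_add hfg hgh, ← integral_const_mul]
  exact integral_mono_of_nonneg (.of_forall fun x => sq_nonneg _) ((hfg.add hgh).const_mul 2)
    (.of_forall fun x => sub_sq_le_two_mul_add _ _ _)

lemma ae_sub_sq_le_of_integral_sub_sq_le [IsFiniteMeasure μ] {η m δ : ℝ} (hη : 0 ≤ η)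
    (hm : 0 ≤ m) {f₀ f₁ f : E → ℝ} (hf₀ : AEMeasurable f₀ μ) (hf₁ : AEMeasurable f₁ μ)
    (hf : AEMeasurable f μ)
    (hff₀ : ∀ᵐ x ∂μ, (f x - f₀ x) ^ 2 ≤ η * (m * ∫ x, (f x - f₀ x) ^ 2 ∂μ + δ ^ 2))
    (hf₁f₀ : ∀ᵐ x ∂μ, (f₁ x - f₀ x) ^ 2 ≤ η * (m * ∫ x, (f₁ x - f₀ x) ^ 2 ∂μ + δ ^ 2))
    (hff₁ : ∫ x, (f x - f₁ x) ^ 2 ∂μ ≤ (∫ x, (f₁ x - f₀ x) ^ 2 ∂μ) / 32) :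
    ∀ᵐ x ∂μ, (f x - f₁ x) ^ 2 ≤ 49 / 8 * (η * (m * ∫ x, (f₁ x - f₀ x) ^ 2 ∂μ + δ ^ 2)) := by
  set a := ∫ x, (f₁ x - f₀ x) ^ 2 ∂μ
  set b := ∫ x, (f x - f₀ x) ^ 2 ∂μ
  have sq_ff₁_le : ∀ᵐ x ∂μ, (f x - f₁ x) ^ 2 ≤
      2 * (η * (m * b + δ ^ 2) + η * (m * a + δ ^ 2)) := by
    filter_upwards [hff₀, hf₁f₀] with x h h₁
    linarith [sub_sq_le_two_mul_add (f x) (f₀ x) (f₁ x), sub_sq_comm (f₀ x) (f₁ x)]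
  have b_le : b ≤ 33 / 16 * a := by
    have ff₁_int : Integrable (fun x => (f x - f₁ x) ^ 2) μ :=
      .of_mem_Icc 0 _ ((hf.sub hf₁).pow_const 2) (sq_ff₁_le.mono fun x h => ⟨sq_nonneg _, h⟩)
    have f₁f₀_int : Integrable (fun x => (f₁ x - f₀ x) ^ 2) μ :=
      .of_mem_Icc 0 _ ((hf₁.sub hf₀).pow_const 2) (hf₁f₀.mono fun x h => ⟨sq_nonneg _, h⟩)
    linarith [integral_sub_sq_le_two_mul_add ff₁_int f₁f₀_int]
  have scale_le : η * (m * b + δ ^ 2) ≤ 33 / 16 * (η * (m * a + δ ^ 2)) := by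
    have : m * b ≤ m * (33 / 16 * a) := by gcongr
    calc η * (m * b + δ ^ 2) ≤ η * (33 / 16 * (m * a + δ ^ 2)) := by
          gcongr
          linarith [sq_nonneg δ]
      _ = 33 / 16 * (η * (m * a + δ ^ 2)) := by ring
  exact sq_ff₁_le.mono fun x h => by linarith

theorem statement17_general [IsProbabilityMeasure μ] {η m δ : ℝ} (n : ℕ) (hη : 0 < η)
    (hm : 0 ≤ m) (hδ : 0 < δ) {f₀ f₁ f : E → ℝ} (hf₀ : AEMeasurable f₀ μ)
    (hf₁ : AEMeasurable f₁ μ) (hf : AEMeasurable f μ)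
    (hff₀ : ∀ᵐ x ∂μ, (f x - f₀ x) ^ 2 ≤ η * (m * ∫ x, (f x - f₀ x) ^ 2 ∂μ + δ ^ 2))
    (hf₁f₀ : ∀ᵐ x ∂μ, (f₁ x - f₀ x) ^ 2 ≤ η * (m * ∫ x, (f₁ x - f₀ x) ^ 2 ∂μ + δ ^ 2))
    (hff₁ : ∫ x, (f x - f₁ x) ^ 2 ∂μ ≤ (∫ x, (f₁ x - f₀ x) ^ 2 ∂μ) / 32) :
    Measure.pi (fun _ : Fin n => μ)
        {X | (1 / 16 : ℝ) * ((1 / (n : ℝ)) * ∑ i, (f₁ (X i) - f₀ (X i)) ^ 2) <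
          (1 / (n : ℝ)) * ∑ i, (f (X i) - f₁ (X i)) ^ 2} ≤
      ENNReal.ofReal (exp (-(1 / (2352 * η)) * n * (∫ x, (f₁ x - f₀ x) ^ 2 ∂μ) /
        (m * ∫ x, (f₁ x - f₀ x) ^ 2 ∂μ + δ ^ 2))) := by
  set a := ∫ x, (f₁ x - f₀ x) ^ 2 ∂μ
  set D := m * a + δ ^ 2
  have D_pos : 0 < D :=
    add_pos_of_nonneg_of_pos (mul_nonneg hm (integral_nonneg fun x => sq_nonneg _)) (pow_pos hδ 2)
  have ηD_pos : 0 < η * D := mul_pos hη D_pos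
  have comparison := measureReal_pi_mul_sum_le_sum_le_exp (Fin n) (c := 1 / 16)
    (U := fun x => (f x - f₁ x) ^ 2) (V := fun x => (f₁ x - f₀ x) ^ 2)
    (M := 49 / 8 * (η * D)) ((hf.sub hf₁).pow_const 2) ((hf₁.sub hf₀).pow_const 2)
    ((ae_sub_sq_le_of_integral_sub_sq_le hη.le hm hf₀ hf₁ hf hff₀ hf₁f₀ hff₁).mono
      fun x h => ⟨sq_nonneg _, h⟩)
    (hf₁f₀.mono fun x h => ⟨sq_nonneg _, by linarith⟩)
    (by positivity) (by norm_num) (by norm_num) (by linarith)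
  rw [← ofReal_measureReal]
  refine ENNReal.ofReal_le_ofReal ((measureReal_mono fun X hX => ?_).trans
    (comparison.trans_eq ?_))
  · rw [Set.mem_ofPred_eq, mul_left_comm] at hX
    exact (lt_of_mul_lt_mul_left hX (by positivity)).le
  · rw [Fintype.card_fin]
    congr 1
    change -(n * (1 / 16 * a) / (24 * (49 / 8 * (η * D)))) = -(1 / (2352 * η)) * n * a / D
    field_simp
    ring

end EmpiricalComparison

section UnitCube

variable {p : ℕ}

instance : IsProbabilityMeasure (designMeasure p) :=
  ⟨by simp [designMeasure, cube, Real.volume_Icc_pi]⟩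

lemma l2dist_sq (f g : (Fin p → ℝ) → ℝ) :
    l2dist p f g ^ 2 = ∫ x, (f x - g x) ^ 2 ∂designMeasure p :=
  sq_sqrt (integral_nonneg fun _ => sq_nonneg _)

lemma sub_sq_le_supdist_sq {f g : (Fin p → ℝ) → ℝ} (hf : ∃ B, ∀ x, |f x| ≤ B)
    (hg : ∃ B, ∀ x, |g x| ≤ B) {x : Fin p → ℝ} (hx : x ∈ cube p) :
    (f x - g x) ^ 2 ≤ supdist p f g ^ 2 := by
  obtain ⟨A, hA⟩ := hf
  obtain ⟨B, hB⟩ := hg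
  have bdd : BddAbove (Set.range fun x : cube p => |f x - g x|) :=
    ⟨A + B, Set.forall_mem_range.2 fun y => (abs_sub _ _).trans (add_le_add (hA y) (hB y))⟩
  exact sq_le_sq.2 ((le_ciSup bdd ⟨x, hx⟩).trans (le_abs_self _))

lemma ae_sub_sq_le_of_supdist_sq_le {f g : (Fin p → ℝ) → ℝ} (hf : ∃ B, ∀ x, |f x| ≤ B)
    (hg : ∃ B, ∀ x, |g x| ≤ B) {K : ℝ} (hK : supdist p f g ^ 2 ≤ K) :
    ∀ᵐ x ∂designMeasure p, (f x - g x) ^ 2 ≤ K :=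
  (ae_restrict_mem measurableSet_Icc).mono fun _ hx => (sub_sq_le_supdist_sq hf hg hx).trans hK

end UnitCube

/-- Bernstein bound for the empirical comparison of
`Pₙ(f - f₁)²` and `Pₙ(f₁ - f₀)²`. -/
theorem statement17 (η : ℝ) (hη : 0 < η) :
    ∃ C : ℝ, 0 < C ∧
      ∀ (p n m : ℕ) (δ : ℝ), 0 < m → 0 < δ →
        ∀ f₀ f₁ f : (Fin p → ℝ) → ℝ,
          Measurable f₀ → Measurable f₁ → Measurable f →
          (∃ B : ℝ, ∀ x, |f₀ x| ≤ B) → (∃ B : ℝ, ∀ x, |f₁ x| ≤ B) →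
          (∃ B : ℝ, ∀ x, |f x| ≤ B) →
          supdist p f f₀ ^ 2 ≤ η * ((m : ℝ) * l2dist p f f₀ ^ 2 + δ ^ 2) →
          supdist p f₁ f₀ ^ 2 ≤ η * ((m : ℝ) * l2dist p f₁ f₀ ^ 2 + δ ^ 2) →
          l2dist p f f₁ ^ 2 ≤ l2dist p f₁ f₀ ^ 2 / 32 →
          0 < l2dist p f₁ f₀ →
          Measure.pi (fun _ : Fin n => designMeasure p)
              {X | (1 / 16 : ℝ) * ((1 / (n : ℝ)) * ∑ i, (f₁ (X i) - f₀ (X i)) ^ 2) <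
                (1 / (n : ℝ)) * ∑ i, (f (X i) - f₁ (X i)) ^ 2} ≤
            ENNReal.ofReal (Real.exp (-C * (n : ℝ) * l2dist p f₁ f₀ ^ 2 /
              ((m : ℝ) * l2dist p f₁ f₀ ^ 2 + δ ^ 2))) := by
  refine ⟨1 / (2352 * η), by positivity, fun p n m δ _ hδ f₀ f₁ f hf₀ hf₁ hf bf₀ bf₁ bf => ?_⟩
  rw [l2dist_sq, l2dist_sq, l2dist_sq]
  exact fun hff₀ hf₁f₀ hff₁ _ => statement17_general n hη m.cast_nonneg hδ hf₀.aemeasurable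
    hf₁.aemeasurable hf.aemeasurable (ae_sub_sq_le_of_supdist_sq_le bf bf₀ hff₀)
    (ae_sub_sq_le_of_supdist_sq_le bf₁ bf₀ hf₁f₀) hff₁
end
end
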